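/- Let K be a field of characteristic zero, f_1,...,f_m ∈ K[X] with deg f_i = d_i, and P = Σ_{j=1}^k a_j Π_{i=1}^m f_i^{α_{ij}}, where α_{ij} are nonnegative integers. Let ξ ∈ K and let μ_i be the multiplicity of ξ as a root of f_i. If P ≠ 0, then the multiplicity of ξ as a root of P is at most max_{1≤j≤k} Σ_{i=1}^m (μ_i α_{ij} + (d_i − μ_i)·(k+1−j choose 2)). -/

import Mathlib

open Polynomial

/-!
Let `h₁, …, hₙ` be linearly independent products of powers of the `fᵢ`, let `P = ∑ cⱼ hⱼ` with
`c_{j₀} ≠ 0`, and put `F = ∏ fᵢ`, so that each `hⱼ` divides `F` times its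
derivative. In characteristic zero the Wronskian `W = W(h₁, …, hₙ)` is nonzero, and its order at `ξ`
is bounded on both sides.

* Replacing `h_{j₀}` by `P` only multiplies `W` by `c_{j₀}`, and row `l` of a Wronskian matrix
  loses at most `l` in order, so `ord P + ∑_{j ≠ j₀} ord hⱼ ≤ ord W + n.choose 2`.
* `∏ hⱼ` divides `F ^ (n.choose 2) * W`, and divisibility is monotone in degree minus order. As
  `deg W ≤ ∑ deg hⱼ - n.choose 2`, this bounds `ord W` from above by
  `∑ ord hⱼ - n.choose 2 + (n.choose 2) * (deg F - ord F)`.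

Together, `ord P ≤ ord h_{j₀} + (n.choose 2) * (deg F - ord F)`. The dependence of the bound on `j`
comes from discarding the first products until `P` leaves the span of the remaining ones: the last
one discarded serves as `h_{j₀}`, and `n` is at most the number of products left including it.
-/

section Multiplicity

variable {R : Type*} [CommRing R] [IsDomain R]

theorem rootMultiplicity_prod {ι : Type*} (s : Finset ι) (p : ι → R[X]) (hp : ∀ i ∈ s, p i ≠ 0)
    (ξ : R) : (∏ i ∈ s, p i).rootMultiplicity ξ = ∑ i ∈ s, (p i).rootMultiplicity ξ := by
  classical
  simp only [← count_roots]
  rw [roots_prod _ _ (Finset.prod_ne_zero_iff.mpr hp), Multiset.count_bind]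
  rfl

theorem rootMultiplicity_pow (p : R[X]) (n : ℕ) (ξ : R) :
    (p ^ n).rootMultiplicity ξ = n * p.rootMultiplicity ξ := by
  classical
  simp only [← count_roots, roots_pow, Multiset.count_nsmul]

theorem rootMultiplicity_le_natDegree (p : R[X]) (ξ : R) :
    p.rootMultiplicity ξ ≤ p.natDegree := by
  classical
  rw [← count_roots]
  exact (Multiset.count_le_card _ _).trans (card_roots' p)

theorem rootMultiplicity_add_natDegree_le_of_dvd {p q : R[X]} (hq : q ≠ 0) (hpq : p ∣ q) (ξ : R) :
    q.rootMultiplicity ξ + p.natDegree ≤ p.rootMultiplicity ξ + q.natDegree := by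
  obtain ⟨r, rfl⟩ := hpq
  have hr := rootMultiplicity_le_natDegree r ξ
  rw [rootMultiplicity_mul hq, natDegree_mul (left_ne_zero_of_mul hq) (right_ne_zero_of_mul hq)]
  omega

end Multiplicity

section Determinant

variable {R : Type*} [CommRing R]

theorem prod_dvd_det {ι : Type*} [Fintype ι] [DecidableEq ι] {M : Matrix ι ι R} {d : ι → R}
    (h : ∀ i j, d j ∣ M i j) : ∏ j, d j ∣ M.det := by
  choose q hq using h
  have hM : M = Matrix.of fun i j => d j * q i j := Matrix.ext hq
  rw [hM]
  exact ⟨_, Matrix.det_mul_row d q⟩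

theorem natDegree_det_le {ι : Type*} [Fintype ι] [DecidableEq ι] {M : Matrix ι ι R[X]} {e : ι → ℕ}
    (h : ∀ i j, (M i j).natDegree ≤ e j) : M.det.natDegree ≤ ∑ j, e j := by
  rw [Matrix.det_apply]
  refine natDegree_sum_le_of_forall_le _ _ fun σ _ => ?_
  calc (Equiv.Perm.sign σ • ∏ j, M (σ j) j).natDegree
      ≤ (∏ j, M (σ j) j).natDegree := natDegree_smul_le _ _
    _ ≤ ∑ j, (M (σ j) j).natDegree := natDegree_prod_le _ _
    _ ≤ ∑ j, e j := Finset.sum_le_sum fun j _ => h _ _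

theorem det_pow_mul_row {n : ℕ} (u : R) (M : Matrix (Fin n) (Fin n) R) :
    (Matrix.of fun l j : Fin n => u ^ (l : ℕ) * M l j).det = u ^ n.choose 2 * M.det := by
  rw [Matrix.det_mul_column, Finset.prod_pow_eq_pow_sum, Fin.sum_univ_eq_sum_range (fun i => i) n,
    Finset.sum_range_id, Nat.choose_two_right]

end Determinant

section DvdMulDerivative

variable {R : Type*} [CommRing R]

theorem pow_dvd_mul_derivative (f : R[X]) (n : ℕ) : f ^ n ∣ f * derivative (f ^ n) := by
  rcases n with _ | n
  · simp
  · rw [derivative_pow_succ]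
    exact ⟨C (n + 1 : R) * derivative f, by ring⟩

theorem mul_dvd_mul_derivative {F G p q : R[X]} (hp : p ∣ F * derivative p)
    (hq : q ∣ G * derivative q) : p * q ∣ F * G * derivative (p * q) := by
  have hsplit : F * G * derivative (p * q) =
      F * derivative p * q * G + p * (G * derivative q) * F := by
    rw [derivative_mul]
    ring
  rw [hsplit]
  exact dvd_add ((mul_dvd_mul_right hp q).mul_right G) ((mul_dvd_mul_left p hq).mul_right F)

theorem prod_pow_dvd_mul_derivative {ι : Type*} (s : Finset ι) (f : ι → R[X]) (α : ι → ℕ) :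
    ∏ i ∈ s, f i ^ α i ∣ (∏ i ∈ s, f i) * derivative (∏ i ∈ s, f i ^ α i) := by
  classical
  induction s using Finset.induction_on with
  | empty => simp
  | insert i s hi ih =>
    simp only [Finset.prod_insert hi]
    exact mul_dvd_mul_derivative (pow_dvd_mul_derivative _ _) ih

theorem dvd_mul_derivative_of_dvd {F g p : R[X]} (hg : g ∣ F * derivative g) (hp : g ∣ p) :
    g ∣ F * derivative p := by
  obtain ⟨q, rfl⟩ := hp
  have hsplit : F * derivative (g * q) = F * derivative g * q + g * (F * derivative q) := by
    rw [derivative_mul]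
    ring
  rw [hsplit]
  exact dvd_add (hg.mul_right q) (dvd_mul_right g _)

theorem dvd_pow_mul_iterate_derivative {F g : R[X]} (hg : g ∣ F * derivative g) (l : ℕ) :
    g ∣ F ^ l * derivative^[l] g := by
  induction l with
  | zero => simp
  | succ l ih =>
    have hstep : F ^ (l + 1) * derivative^[l + 1] g =
        F * derivative (F ^ l * derivative^[l] g)
          - C (l : R) * derivative F * (F ^ l * derivative^[l] g) := by
      rw [derivative_mul, Function.iterate_succ_apply', derivative_pow]
      rcases l with _ | l
      · simp
      · rw [Nat.add_sub_cancel]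
        ring
    rw [hstep]
    exact dvd_sub (dvd_mul_derivative_of_dvd hg ih) (ih.mul_left _)

end DvdMulDerivative

/-- The Wronskian matrix of a finite family of polynomials: row `l` consists of the `l`-th
derivatives, counted from `l = 0`. Its determinant is the Wronskian of the family. -/
noncomputable def wronskianMatrix {R : Type*} [CommRing R] {n : ℕ} (g : Fin n → R[X]) :
    Matrix (Fin n) (Fin n) R[X] :=
  Matrix.of fun l j => derivative^[(l : ℕ)] (g j)

section Wronskian

variable {R : Type*} [CommRing R] {n : ℕ}

theorem wronskianMatrix_mulVec_eq_zero_iff (g c : Fin n → R[X]) :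
    (wronskianMatrix g).mulVec c = 0 ↔ ∀ l < n, ∑ j, c j * derivative^[l] (g j) = 0 := by
  simp only [funext_iff, Fin.forall_iff, Matrix.mulVec, dotProduct, wronskianMatrix,
    Matrix.of_apply, Pi.zero_apply, mul_comm (c _)]

theorem det_wronskianMatrix_update_sum (g : Fin n → R[X]) (c : Fin n → R) (j₀ : Fin n) :
    (wronskianMatrix (Function.update g j₀ (∑ j, c j • g j))).det =
      C (c j₀) * (wronskianMatrix g).det := by
  have hcol : wronskianMatrix (Function.update g j₀ (∑ j, c j • g j)) =
      (wronskianMatrix g).updateCol j₀ fun l => ∑ j, C (c j) • wronskianMatrix g l j := by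
    ext1 l j
    rcases eq_or_ne j j₀ with rfl | hj
    · simp [wronskianMatrix, iterate_derivative_sum, smul_eq_C_mul]
    · simp [wronskianMatrix, hj]
  rw [hcol, Matrix.det_updateCol_sum, smul_eq_mul]

theorem prod_dvd_pow_mul_det_wronskianMatrix {F : R[X]} {g : Fin n → R[X]}
    (hg : ∀ j, g j ∣ F * derivative (g j)) :
    ∏ j, g j ∣ F ^ n.choose 2 * (wronskianMatrix g).det := by
  rw [← det_pow_mul_row]
  exact prod_dvd_det fun l j => dvd_pow_mul_iterate_derivative (hg j) l

theorem natDegree_det_wronskianMatrix_add_choose_le {g : Fin n → R[X]}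
    (hW : (wronskianMatrix g).det ≠ 0) :
    (wronskianMatrix g).det.natDegree + n.choose 2 ≤ ∑ j, (g j).natDegree := by
  have : Nontrivial R := Polynomial.nontrivial_iff.mp (nontrivial_of_ne _ _ hW)
  have hentry (l j : Fin n) :
      (X ^ (l : ℕ) * wronskianMatrix g l j).natDegree ≤ (g j).natDegree := by
    rcases le_or_gt (l : ℕ) (g j).natDegree with hl | hl
    · calc (X ^ (l : ℕ) * derivative^[(l : ℕ)] (g j)).natDegree
          ≤ l + ((g j).natDegree - l) := natDegree_mul_le_of_le (natDegree_X_pow_le _)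
            (natDegree_iterate_derivative (g j) l)
        _ = (g j).natDegree := Nat.add_sub_cancel' hl
    · simp [wronskianMatrix, iterate_derivative_eq_zero hl]
  rw [← natDegree_X_pow_mul _ hW, ← det_pow_mul_row]
  exact natDegree_det_le hentry

theorem sum_rootMultiplicity_le_det_wronskianMatrix {g : Fin n → R[X]}
    (hW : (wronskianMatrix g).det ≠ 0) (ξ : R) :
    ∑ j, (g j).rootMultiplicity ξ ≤ (wronskianMatrix g).det.rootMultiplicity ξ + n.choose 2 := by
  have hentry (l j : Fin n) : (X - C ξ) ^ (g j).rootMultiplicity ξ ∣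
      (X - C ξ) ^ (l : ℕ) * wronskianMatrix g l j := by
    have hder := pow_sub_dvd_iterate_derivative_of_pow_dvd l (pow_rootMultiplicity_dvd (g j) ξ)
    calc (X - C ξ) ^ (g j).rootMultiplicity ξ
        ∣ (X - C ξ) ^ ((l : ℕ) + ((g j).rootMultiplicity ξ - l)) := pow_dvd_pow _ (by omega)
      _ = (X - C ξ) ^ (l : ℕ) * (X - C ξ) ^ ((g j).rootMultiplicity ξ - l) := pow_add _ _ _
      _ ∣ (X - C ξ) ^ (l : ℕ) * wronskianMatrix g l j := mul_dvd_mul_left _ hder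
  have hdvd := prod_dvd_det (M := Matrix.of fun l j : Fin n =>
    (X - C ξ) ^ (l : ℕ) * wronskianMatrix g l j) hentry
  have hmul : (X - C ξ) ^ n.choose 2 * (wronskianMatrix g).det ≠ 0 := by
    rwa [Ne, ((monic_X_sub_C ξ).pow _).mul_right_eq_zero_iff]
  rwa [Finset.prod_pow_eq_pow_sum, det_pow_mul_row, ← le_rootMultiplicity_iff hmul, mul_comm,
    rootMultiplicity_mul_X_sub_C_pow hW] at hdvd

theorem rootMultiplicity_det_wronskianMatrix_add_le [IsDomain R] {F : R[X]} (hF : F ≠ 0)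
    {g : Fin n → R[X]} (hg : ∀ j, g j ∣ F * derivative (g j))
    (hW : (wronskianMatrix g).det ≠ 0) (ξ : R) :
    (wronskianMatrix g).det.rootMultiplicity ξ + n.choose 2 ≤ ∑ j, (g j).rootMultiplicity ξ +
      (F.natDegree - F.rootMultiplicity ξ) * n.choose 2 := by
  have hFN : F ^ n.choose 2 ≠ 0 := pow_ne_zero _ hF
  have hdvd := prod_dvd_pow_mul_det_wronskianMatrix hg
  have hFW := mul_ne_zero hFN hW
  have hg0 : ∀ j ∈ Finset.univ, g j ≠ 0 :=
    Finset.prod_ne_zero_iff.mp (ne_zero_of_dvd_ne_zero hFW hdvd)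
  have hcompare := rootMultiplicity_add_natDegree_le_of_dvd hFW hdvd ξ
  rw [rootMultiplicity_mul hFW, rootMultiplicity_pow, natDegree_mul hFN hW, natDegree_pow,
    rootMultiplicity_prod _ _ hg0, natDegree_prod _ _ hg0] at hcompare
  have hdeg := natDegree_det_wronskianMatrix_add_choose_le hW
  have hFξ := Nat.mul_le_mul_left (n.choose 2) (rootMultiplicity_le_natDegree F ξ)
  rw [mul_comm, Nat.mul_sub]
  omega

end Wronskian

section Nonvanishing

theorem sum_derivative_mul_iterate_derivative_eq_zero {R ι : Type*} [CommRing R] [Fintype ι]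
    {g c : ι → R[X]} {l : ℕ} (h : ∑ j, c j * derivative^[l] (g j) = 0)
    (h' : ∑ j, c j * derivative^[l + 1] (g j) = 0) :
    ∑ j, derivative (c j) * derivative^[l] (g j) = 0 := by
  have hder := congrArg derivative h
  simp only [derivative_sum, derivative_mul, derivative_zero, Finset.sum_add_distrib,
    ← Function.iterate_succ_apply' derivative] at hder
  rwa [h', add_zero] at hder

theorem eq_zero_of_sum_mul_iterate_derivative_eq_zero {R : Type*} [CommRing R] [IsDomain R] {n : ℕ}
    {g : Fin (n + 1) → R[X]} (hW : (wronskianMatrix (Fin.tail g)).det ≠ 0) {v : Fin (n + 1) → R[X]}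
    (hv₀ : v 0 = 0) (hv : ∀ l < n, ∑ j, v j * derivative^[l] (g j) = 0) : v = 0 := by
  have htail : Fin.tail v = 0 := by
    refine Matrix.eq_zero_of_mulVec_eq_zero hW ((wronskianMatrix_mulVec_eq_zero_iff _ _).mpr ?_)
    intro l hl
    simpa [Fin.sum_univ_succ, hv₀, Fin.tail] using hv l hl
  exact funext <| Fin.cases hv₀ (congrFun htail)

theorem wronskian_eq_zero_of_mulVec_eq_zero {R : Type*} [CommRing R] [IsDomain R] {n : ℕ}
    {g c : Fin (n + 1) → R[X]} (hW : (wronskianMatrix (Fin.tail g)).det ≠ 0)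
    (hc : (wronskianMatrix g).mulVec c = 0) (j : Fin (n + 1)) : wronskian (c 0) (c j) = 0 := by
  rw [wronskianMatrix_mulVec_eq_zero_iff] at hc
  refine congrFun (eq_zero_of_sum_mul_iterate_derivative_eq_zero hW
    (v := fun j => wronskian (c 0) (c j)) (wronskian_self_eq_zero _) fun l hl => ?_) j
  have hrel := hc l (by omega)
  have hder := sum_derivative_mul_iterate_derivative_eq_zero hrel (hc (l + 1) (by omega))
  simp only [wronskian, sub_mul, mul_assoc, Finset.sum_sub_distrib, ← Finset.mul_sum, hrel, hder,
    mul_zero, sub_zero]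

variable {K : Type*} [Field K] [CharZero K]

theorem exists_eq_C_mul_of_wronskian_eq_zero {a b : K[X]} (ha : a ≠ 0) (h : wronskian a b = 0) :
    ∃ c : K, b = C c * a := by
  obtain ⟨p, q, d, hpq, rfl, rfl⟩ := UniqueFactorizationMonoid.exists_reduced_factors a ha b
  have hd : d ≠ 0 := left_ne_zero_of_mul ha
  have hpq_wronskian : wronskian p q = 0 := by
    have hscale : wronskian (d * p) (d * q) = d ^ 2 * wronskian p q := by
      simp only [wronskian, derivative_mul]
      ring
    exact (mul_eq_zero.mp (hscale ▸ h)).resolve_left (pow_ne_zero 2 hd)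
  obtain ⟨hp', hq'⟩ := hpq.isCoprime.wronskian_eq_zero_iff.mp hpq_wronskian
  obtain ⟨x, rfl⟩ := natDegree_eq_zero.mp (derivative_eq_zero.mp hp')
  obtain ⟨y, rfl⟩ := natDegree_eq_zero.mp (derivative_eq_zero.mp hq')
  have hx : x ≠ 0 := C_ne_zero.mp (right_ne_zero_of_mul ha)
  refine ⟨y / x, ?_⟩
  rw [mul_left_comm, ← C_mul, div_mul_cancel₀ _ hx]

theorem det_wronskianMatrix_ne_zero {n : ℕ} {g : Fin n → K[X]} (hg : LinearIndependent K g) :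
    (wronskianMatrix g).det ≠ 0 := by
  induction n with
  | zero => simp
  | succ n ih =>
    have htail : (wronskianMatrix (Fin.tail g)).det ≠ 0 :=
      ih (hg.comp _ (Fin.succ_injective n))
    intro hdet
    obtain ⟨c, hc_ne, hc⟩ := Matrix.exists_mulVec_eq_zero_iff.mpr hdet
    have hrel := (wronskianMatrix_mulVec_eq_zero_iff g c).mp hc
    have hc₀ : c 0 ≠ 0 := fun h₀ => hc_ne <|
      eq_zero_of_sum_mul_iterate_derivative_eq_zero htail h₀ fun l hl => hrel l (by omega)
    choose b hb using fun j =>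
      exists_eq_C_mul_of_wronskian_eq_zero hc₀ (wronskian_eq_zero_of_mulVec_eq_zero htail hc j)
    have hb_rel : ∑ j, b j • g j = 0 := by
      refine (mul_eq_zero.mp ?_).resolve_left hc₀
      calc c 0 * ∑ j, b j • g j = ∑ j, c j * g j := by
            rw [Finset.mul_sum]
            refine Finset.sum_congr rfl fun j _ => ?_
            rw [hb j, smul_eq_C_mul]
            ring
        _ = 0 := hrel 0 (by omega)
    have hb₀ := Fintype.linearIndependent_iff.mp hg b hb_rel 0
    exact hc₀ (by rw [hb 0, hb₀, C_0, zero_mul])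

end Nonvanishing

section Span

variable {K V : Type*} [DivisionRing K] [AddCommGroup V] [Module K V]

theorem exists_linearIndependent_fin {ι : Type*} [Fintype ι] (v : ι → V) :
    ∃ r ≤ Fintype.card ι, ∃ e : Fin r → ι, LinearIndependent K (v ∘ e) ∧
      Submodule.span K (Set.range (v ∘ e)) = Submodule.span K (Set.range v) := by
  obtain ⟨κ, e, he, hspan, hli⟩ := exists_linearIndependent' K v
  have : Fintype κ := Fintype.ofInjective e he
  let σ := (Fintype.equivFin κ).symm
  refine ⟨Fintype.card κ, Fintype.card_le_of_injective e he, e ∘ σ, hli.comp σ σ.injective, ?_⟩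
  rw [← Function.comp_assoc, σ.surjective.range_comp, hspan]

theorem exists_linearIndependent_cons_of_notMem_span {k : ℕ} {g : Fin (k + 1) → V} {x : V}
    (hx : x ∈ Submodule.span K (Set.range g))
    (hx' : x ∉ Submodule.span K (Set.range (Fin.tail g))) :
    ∃ r ≤ k, ∃ e : Fin r → Fin k, ∃ c : Fin (r + 1) → K, c 0 ≠ 0 ∧
      LinearIndependent K (Fin.cons (g 0) (Fin.tail g ∘ e) : Fin (r + 1) → V) ∧
      x = ∑ j, c j • (Fin.cons (g 0) (Fin.tail g ∘ e) : Fin (r + 1) → V) j := by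
  have hrange : Set.range g = insert (g 0) (Set.range (Fin.tail g)) := by
    rw [← Fin.range_cons, Fin.cons_self_tail]
  rw [hrange, Submodule.mem_span_insert] at hx
  obtain ⟨c₀, z, hz, rfl⟩ := hx
  have hc₀g : c₀ • g 0 ∉ Submodule.span K (Set.range (Fin.tail g)) := fun h =>
    hx' (add_mem h hz)
  obtain ⟨r, hr, e, hli, hspan⟩ := exists_linearIndependent_fin (K := K) (Fin.tail g)
  rw [← hspan] at hz hc₀g
  obtain ⟨c, rfl⟩ := (Submodule.mem_span_range_iff_exists_fun K).mp hz
  refine ⟨r, by simpa using hr, e, Fin.cons c₀ c, ?_, ?_, ?_⟩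
  · rintro rfl
    simp at hc₀g
  · exact linearIndependent_finCons.mpr ⟨hli, fun h => hc₀g (Submodule.smul_mem _ _ h)⟩
  · simp [Fin.sum_univ_succ]

end Span

section MultiplicityBound

variable {K : Type*} [Field K] [CharZero K]

theorem rootMultiplicity_sum_smul_le {n : ℕ} {F : K[X]} (hF : F ≠ 0) {h : Fin n → K[X]}
    (hli : LinearIndependent K h) (hd : ∀ j, h j ∣ F * derivative (h j)) {c : Fin n → K}
    {j₀ : Fin n} (hc : c j₀ ≠ 0) (ξ : K) :
    (∑ j, c j • h j).rootMultiplicity ξ ≤ (h j₀).rootMultiplicity ξ +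
      (F.natDegree - F.rootMultiplicity ξ) * n.choose 2 := by
  have hW := det_wronskianMatrix_ne_zero hli
  have hcW : C (c j₀) * (wronskianMatrix h).det ≠ 0 := mul_ne_zero (C_ne_zero.mpr hc) hW
  have hupper := rootMultiplicity_det_wronskianMatrix_add_le hF hd hW ξ
  have hlower := sum_rootMultiplicity_le_det_wronskianMatrix
    (det_wronskianMatrix_update_sum h c j₀ ▸ hcW) ξ
  rw [det_wronskianMatrix_update_sum, rootMultiplicity_mul hcW, rootMultiplicity_C, zero_add]
    at hlower
  set P := ∑ j, c j • h j
  have hupdate : ∑ j, (Function.update h j₀ P j).rootMultiplicity ξ + (h j₀).rootMultiplicity ξ =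
      P.rootMultiplicity ξ + ∑ j, (h j).rootMultiplicity ξ := by
    simp only [Function.apply_update fun _ => rootMultiplicity ξ,
      Finset.sum_update_of_mem (Finset.mem_univ j₀),
      Finset.sum_eq_add_sum_sdiff_singleton_of_mem (Finset.mem_univ j₀) fun j =>
        (h j).rootMultiplicity ξ]
    ring
  omega

theorem exists_rootMultiplicity_le_of_mem_span {F : K[X]} (hF : F ≠ 0) {k : ℕ} {g : Fin k → K[X]}
    (hg : ∀ j, g j ∣ F * derivative (g j)) {P : K[X]} (hP : P ≠ 0)
    (hPg : P ∈ Submodule.span K (Set.range g)) (ξ : K) :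
    ∃ j : Fin k, P.rootMultiplicity ξ ≤ (g j).rootMultiplicity ξ +
      (F.natDegree - F.rootMultiplicity ξ) * (k - (j : ℕ)).choose 2 := by
  induction k with
  | zero => simp [hP] at hPg
  | succ k ih =>
    by_cases htail : P ∈ Submodule.span K (Set.range (Fin.tail g))
    · obtain ⟨j, hj⟩ := ih (fun j => hg j.succ) htail
      exact ⟨j.succ, by simpa [Fin.tail] using hj⟩
    obtain ⟨r, hr, e, c, hc, hli, rfl⟩ := exists_linearIndependent_cons_of_notMem_span hPg htail
    refine ⟨0, (rootMultiplicity_sum_smul_le hF hli ?_ hc ξ).trans ?_⟩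
    · exact Fin.cases (hg 0) fun i => hg (e i).succ
    · rw [Fin.cons_zero, Fin.val_zero, Nat.sub_zero]
      gcongr

end MultiplicityBound

theorem stmt12 {K : Type*} [Field K] [CharZero K] (m k : ℕ)
    (f : Fin m → K[X]) (hf : ∀ i, f i ≠ 0)
    (a : Fin k → K) (α : Fin m → Fin k → ℕ) (ξ : K)
    (P : K[X]) (hPdef : P = ∑ j, C (a j) * ∏ i, (f i) ^ (α i j))
    (hP : P ≠ 0) :
    ∃ j : Fin k, P.rootMultiplicity ξ ≤
      ∑ i, ((f i).rootMultiplicity ξ * α i j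
        + ((f i).natDegree - (f i).rootMultiplicity ξ) * (k - (j : ℕ)).choose 2) := by
  have hf' : ∀ i ∈ Finset.univ, f i ≠ 0 := fun i _ => hf i
  have hspan : P ∈ Submodule.span K (Set.range fun j => ∏ i, f i ^ α i j) := by
    rw [Submodule.mem_span_range_iff_exists_fun]
    exact ⟨a, by simp only [hPdef, smul_eq_C_mul]⟩
  obtain ⟨j, hj⟩ := exists_rootMultiplicity_le_of_mem_span (Finset.prod_ne_zero_iff.mpr hf')
    (fun j => prod_pow_dvd_mul_derivative _ _ _) hP hspan ξ
  refine ⟨j, hj.trans_eq ?_⟩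
  simp only [rootMultiplicity_prod _ _ hf', natDegree_prod _ _ hf', rootMultiplicity_pow,
    rootMultiplicity_prod _ _ fun i hi => pow_ne_zero (α i j) (hf' i hi), Finset.sum_add_distrib,
    ← Finset.sum_mul, mul_comm (α _ j),
    Finset.sum_tsub_distrib _ fun i _ => rootMultiplicity_le_natDegree (f i) ξ]
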